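/- There exists a constant C > 0 such that for every x = (x₁,x₂,a) ∈ G with r(x) ≥ 1, one has sup_{t>0} |X₀ p_t(x)| ≤ C ( 1/(a · r(x)³ · cosh r(x)) + 1/(r(x)² · cosh² r(x)) ). -/

import Mathlib

open MeasureTheory Real Filter Set
open scoped ENNReal

noncomputable section

/-- The group `G = ℝ² ⋊ ℝ⁺`, realized as triples `(x₁, x₂, a)` (only `a > 0` is relevant). -/
abbrev G : Type := ℝ × ℝ × ℝ

/-- Group product `(x₁,x₂,a)·(x₁',x₂',a') = (x₁+a x₁', x₂+a x₂', a a')`. -/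
def gMul (x y : G) : G := (x.1 + x.2.2 * y.1, x.2.1 + x.2.2 * y.2.1, x.2.2 * y.2.2)

/-- Group inverse `(x₁,x₂,a)⁻¹ = (−x₁/a, −x₂/a, 1/a)`. -/
def gInv (x : G) : G := (-x.1 / x.2.2, -x.2.1 / x.2.2, 1 / x.2.2)

/-- The identity `e = (0,0,1)`. -/
def gE : G := (0, 0, 1)

/-- The right Haar measure `dρ = a⁻¹ dx₁ dx₂ da` (supported where `a > 0`). -/
def ρG : Measure G :=
  (volume : Measure G).withDensity fun x => ENNReal.ofReal (if 0 < x.2.2 then x.2.2⁻¹ else 0)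

/-- The modular function `δ(x₁,x₂,a) = a⁻²`. -/
def deltaG (x : G) : ℝ := (x.2.2 ^ 2)⁻¹

/-- `|x| = √(x₁² + x₂²)`. -/
def normG (x : G) : ℝ := Real.sqrt (x.1 ^ 2 + x.2.1 ^ 2)

/-- `cosh r(x) = (a + a⁻¹ + a⁻¹|x|²)/2`. -/
def coshArg (x : G) : ℝ := (x.2.2 + x.2.2⁻¹ + x.2.2⁻¹ * (x.1 ^ 2 + x.2.1 ^ 2)) / 2

/-- `r(x) ≥ 0` is determined by `cosh r(x) = coshArg x`; explicitly `r = arcosh (coshArg x)`. -/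
def rG (x : G) : ℝ := Real.log (coshArg x + Real.sqrt (coshArg x ^ 2 - 1))

/-- The left-invariant distance `d(x,y) = r(x⁻¹y)`. -/
def dG (x y : G) : ℝ := rG (gMul (gInv x) y)

/-- The heat kernel
`p_t(x) = (8π^{3/2})⁻¹ δ(x)^{1/2} (r(x)/sinh r(x)) t^{−3/2} exp(−r(x)²/(4t))`,
with `r/sinh r := 1` at `x = e`. -/
def heatK (t : ℝ) (x : G) : ℝ :=
  (8 * Real.pi ^ ((3 : ℝ)/2))⁻¹ * Real.sqrt (deltaG x) *
    (if rG x = 0 then 1 else rG x / Real.sinh (rG x)) *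
    t ^ (-(3 : ℝ)/2) * Real.exp (-(rG x ^ 2) / (4 * t))

/-- Convolution `f ∗ p_t(x) = ∫ f(xy⁻¹) p_t(y) dρ(y)`. -/
def convHeat (f : G → ℝ) (t : ℝ) (x : G) : ℝ := ∫ y, f (gMul x (gInv y)) * heatK t y ∂ρG

/-- The heat maximal operator `Mf(x) = sup_{t>0} |f ∗ p_t(x)|` (valued in `ℝ≥0∞`). -/
def maxHeat (f : G → ℝ) (x : G) : ℝ≥0∞ :=
  ⨆ (t : ℝ) (_ : 0 < t), ENNReal.ofReal |convHeat f t x|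

/-- Calderón–Zygmund sets. -/
def IsCZ (R : Set G) : Prop :=
  ∃ c : G, ∃ L r : ℝ, 0 < c.2.2 ∧ 0 < L ∧ 0 < r ∧
    R = Set.Icc (c.1 - L/2) (c.1 + L/2) ×ˢ
        (Set.Icc (c.2.1 - L/2) (c.2.1 + L/2) ×ˢ
         Set.Icc (c.2.2 * Real.exp (-r)) (c.2.2 * Real.exp r)) ∧
    (r < 1 → Real.exp 2 * c.2.2 * r ≤ L ∧ L < Real.exp 8 * c.2.2 * r) ∧
    (1 ≤ r → c.2.2 * Real.exp (2*r) ≤ L ∧ L < c.2.2 * Real.exp (8*r))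

/-- Atoms: `A ∈ L¹(ρ)` supported in a Calderón–Zygmund set `R`, with
`‖A‖_∞ ≤ ρ(R)⁻¹` and `∫ A dρ = 0`. -/
def IsAtomG (A : G → ℝ) : Prop :=
  Integrable A ρG ∧
  ∃ R : Set G, IsCZ R ∧ (∀ x ∉ R, A x = 0) ∧
    eLpNorm A ⊤ ρG ≤ (ρG R)⁻¹ ∧
    ∫ x, A x ∂ρG = 0

/-- `f = Σ_j lam_j A_j` with atoms `A_j`, `Σ_j |lam_j| < ∞`, converging in `L¹(ρ)`. -/
def IsH1Decomp (f : G → ℝ) (lam : ℕ → ℝ) (A : ℕ → G → ℝ) : Prop :=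
  (∀ j, IsAtomG (A j)) ∧ Summable (fun j => |lam j|) ∧
  Tendsto (fun N => eLpNorm (fun x => f x - ∑ j ∈ Finset.range N, lam j * A j x) 1 ρG)
    atTop (nhds 0)

/-- The Hardy space `H¹`. -/
def MemH1 (f : G → ℝ) : Prop :=
  Integrable f ρG ∧ ∃ lam A, IsH1Decomp f lam A

/-- `‖f‖_{H¹} = inf Σ_j |lam_j|` over all atomic decompositions. -/
def H1norm (f : G → ℝ) : ℝ :=
  sInf {s | ∃ lam A, IsH1Decomp f lam A ∧ s = ∑' j, |lam j|}

/-- The left-invariant vector field `X₀ = a ∂_a`. -/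
def X0 (f : G → ℝ) (x : G) : ℝ := x.2.2 * deriv (fun s => f (x.1, x.2.1, s)) x.2.2

/-- The left-invariant vector field `X₁ = a ∂_{x₁}`. -/
def X1 (f : G → ℝ) (x : G) : ℝ := x.2.2 * deriv (fun s => f (s, x.2.1, x.2.2)) x.1

/-- The left-invariant vector field `X₂ = a ∂_{x₂}`. -/
def X2 (f : G → ℝ) (x : G) : ℝ := x.2.2 * deriv (fun s => f (x.1, s, x.2.2)) x.2.1

/-- `‖∇p_t(x)‖`, the Euclidean norm of `(X₀p_t, X₁p_t, X₂p_t)` at `x`. -/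
def gradHeatNorm (t : ℝ) (x : G) : ℝ :=
  Real.sqrt (X0 (heatK t) x ^ 2 + X1 (heatK t) x ^ 2 + X2 (heatK t) x ^ 2)

/-- The Poisson kernel `q_t(x) = π⁻² δ(x)^{1/2} (r(x)/sinh r(x)) · t/(t²+r(x)²)²`. -/
def poissonK (t : ℝ) (x : G) : ℝ :=
  (Real.pi ^ 2)⁻¹ * Real.sqrt (deltaG x) *
    (if rG x = 0 then 1 else rG x / Real.sinh (rG x)) *
    (t / (t ^ 2 + rG x ^ 2) ^ 2)

/-- Convolution `f ∗ q_t(x) = ∫ f(xy⁻¹) q_t(y) dρ(y)`. -/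
def convPoisson (f : G → ℝ) (t : ℝ) (x : G) : ℝ := ∫ y, f (gMul x (gInv y)) * poissonK t y ∂ρG

/-- The Poisson maximal operator `M̃f(x) = sup_{t>0} |f ∗ q_t(x)|`. -/
def maxPoisson (f : G → ℝ) (x : G) : ℝ≥0∞ :=
  ⨆ (t : ℝ) (_ : 0 < t), ENNReal.ofReal |convPoisson f t x|

/-- `G_{r₁}(x) = sup_{z ∈ B(x,r₁/2)} sup_{t>0} ‖∇p_t(z)‖`. -/
def Gsup (r1 : ℝ) (x : G) : ℝ≥0∞ :=
  ⨆ (z : G) (_ : 0 < z.2.2 ∧ dG x z < r1 / 2) (t : ℝ) (_ : 0 < t),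
    ENNReal.ofReal (gradHeatNorm t z)

/-- `R₀ = [−1,1]×[−1,1]×[e⁻¹,e]`. -/
def R0set : Set G :=
  Set.Icc (-1 : ℝ) 1 ×ˢ (Set.Icc (-1 : ℝ) 1 ×ˢ Set.Icc (Real.exp (-1)) (Real.exp 1))

/-- `R_L = [L−1,L+1]×[−1,1]×[e⁻¹,e]`. -/
def RLset (L : ℝ) : Set G :=
  Set.Icc (L - 1) (L + 1) ×ˢ (Set.Icc (-1 : ℝ) 1 ×ˢ Set.Icc (Real.exp (-1)) (Real.exp 1))

/-- `f_L = χ_{R_L} − χ_{R₀}`. -/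
def fL (L : ℝ) : G → ℝ := fun x =>
  (RLset L).indicator (fun _ => (1 : ℝ)) x - R0set.indicator (fun _ => (1 : ℝ)) x

/-- The mean of `g` over `R` with respect to `ρ`. -/
def czMean (g : G → ℝ) (R : Set G) : ℝ := (∫ x in R, g x ∂ρG) / (ρG R).toReal

/-- `‖g‖_{BMO} = sup_R ρ(R)⁻¹ ∫_R |g − g_R| dρ` over Calderón–Zygmund sets `R`. -/
def czBMO (g : G → ℝ) : ℝ≥0∞ :=
  ⨆ (R : Set G) (_ : IsCZ R),
    (ρG R)⁻¹ * ∫⁻ x in R, ENNReal.ofReal |g x - czMean g R| ∂ρG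

/-- `‖h‖_{BMO(ℝ)} = sup_Q |Q|⁻¹ ∫_Q |h − h_Q|` over bounded intervals `Q ⊂ ℝ`. -/
def lineBMO (h : ℝ → ℝ) : ℝ≥0∞ :=
  ⨆ (a : ℝ) (b : ℝ) (_ : a < b),
    (ENNReal.ofReal (b - a))⁻¹ *
      ∫⁻ s in Set.Icc a b, ENNReal.ofReal |h s - (∫ u in Set.Icc a b, h u) / (b - a)|

/-- `2R₀ = [−2,2]×[−2,2]×[e⁻²,e²]`. -/
def twoR0set : Set G :=
  Set.Icc (-2 : ℝ) 2 ×ˢ (Set.Icc (-2 : ℝ) 2 ×ˢ Set.Icc (Real.exp (-2)) (Real.exp 2))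

/-- The set `{x₁ > 3, |x₂| < 1, e⁻¹ < a < e}`. -/
def domSpecial : Set G :=
  {x : G | 3 < x.1 ∧ |x.2.1| < 1 ∧ Real.exp (-1) < x.2.2 ∧ x.2.2 < Real.exp 1}

/-- The function equal to `1/(x₁ (log x₁)^{3/2})` on `{x₁ > 3, |x₂| < 1, e⁻¹ < a < e}`,
to `c₀` on `R₀`, and `0` elsewhere. -/
def fSpecial (c0 : ℝ) : G → ℝ := fun x =>
  domSpecial.indicator (fun y => (y.1 * Real.log y.1 ^ ((3 : ℝ)/2))⁻¹) x
    + R0set.indicator (fun _ => c0) x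

/-!
Write `p_t = δ^{1/2} h_t(r)` and `y = r²/(2t)`. Since `X₀ r = (a - cosh r) / sinh r`,
`X₀ p_t = h_t'(r) / sinh r - a⁻¹ (h_t'(r) coth r + h_t(r))`, where
`h_t' = h_t (1/r - coth r - y/r)`. For `r ≥ 1` the first term is `O(h_t(r) (1 + y) / sinh r)`.
Bounding `h_t' coth r` and `h_t` separately in the second term would lose a factor `r`; because
`1 - coth² r = -1 / sinh² r`, their sum is only `O(h_t(r) (1 + y) / r)`. Finally `h_t(r) (1 + y)`
is `O(1 / (r² sinh r))` uniformly in `t`, because `t ^ (-α) * exp (-c / t)` is bounded by a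
multiple of `c ^ (-α)`.
-/

theorem rpow_neg_mul_exp_neg_div_le {α c t : ℝ} (hα : 0 ≤ α) (hc : 0 < c) (ht : 0 < t) :
    t ^ (-α) * exp (-c / t) ≤ (α / c) ^ α := by
  obtain rfl | hα := hα.eq_or_lt
  · have : 0 ≤ c / t := by positivity
    simpa [neg_div] using this
  have hv : (c / (α * t)) ^ α ≤ exp (c / t) :=
    calc (c / (α * t)) ^ α ≤ exp (c / (α * t)) ^ α := by
          gcongr
          linarith [add_one_le_exp (c / (α * t))]
      _ = exp (c / t) := by
          rw [← exp_mul]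
          congr 1
          field_simp
  calc t ^ (-α) * exp (-c / t)
      = (α / c) ^ α * ((c / (α * t)) ^ α * (exp (c / t))⁻¹) := by
        rw [← mul_assoc, ← mul_rpow (by positivity) (by positivity), rpow_neg ht.le,
          ← inv_rpow ht.le, neg_div, exp_neg]
        congr 2
        field_simp
    _ ≤ (α / c) ^ α := by
        refine mul_le_of_le_one_right (by positivity) ?_
        rw [← div_eq_mul_inv]
        exact div_le_one_of_le₀ hv (exp_pos _).le

theorem rpow_neg_mul_exp_neg_sq_div_le (n : ℕ) {r t : ℝ} (hr : 0 < r) (ht : 0 < t) :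
    t ^ (-(n : ℝ) / 2) * exp (-(r ^ 2) / (4 * t)) ≤ (2 * n) ^ ((n : ℝ) / 2) / r ^ n :=
  calc t ^ (-(n : ℝ) / 2) * exp (-(r ^ 2) / (4 * t))
      = t ^ (-((n : ℝ) / 2)) * exp (-(r ^ 2 / 4) / t) := by
        congr 2 <;> ring
    _ ≤ ((n : ℝ) / 2 / (r ^ 2 / 4)) ^ ((n : ℝ) / 2) :=
        rpow_neg_mul_exp_neg_div_le (by positivity) (by positivity) ht
    _ = (2 * n / r ^ 2) ^ ((n : ℝ) / 2) := by
        congr 1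
        field_simp
        norm_num
    _ = (2 * n) ^ ((n : ℝ) / 2) / r ^ n := by
        rw [div_rpow (by positivity) (by positivity), ← rpow_natCast_mul hr.le]
        simp [mul_div_cancel₀]

theorem cosh_le_two_mul_sinh {r : ℝ} (hr : 1 ≤ r) : cosh r ≤ 2 * sinh r := by
  have hS : r ≤ sinh r := self_le_sinh_iff.mpr (by linarith)
  nlinarith [cosh_sq r]

theorem cosh_div_sinh_le_two {r : ℝ} (hr : 1 ≤ r) : cosh r / sinh r ≤ 2 := by
  have hS : 0 < sinh r := sinh_pos_iff.mpr (by linarith)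
  exact (div_le_iff₀ hS).mpr (cosh_le_two_mul_sinh hr)

theorem one_div_sinh_le_two_div_cosh {r : ℝ} (hr : 1 ≤ r) : 1 / sinh r ≤ 2 / cosh r := by
  have hS : 0 < sinh r := sinh_pos_iff.mpr (by linarith)
  rw [div_le_div_iff₀ hS (cosh_pos r), one_mul]
  exact cosh_le_two_mul_sinh hr

/-- The radial profile `h_t` of the heat kernel, for which `p_t = δ^{1/2} h_t(r)`. The value at
`r = 0` is `0` because of division by zero, so this identity requires `r ≠ 0`. -/
def heatProfile (t r : ℝ) : ℝ :=
  (8 * π ^ ((3 : ℝ) / 2))⁻¹ * (r / sinh r) * t ^ (-(3 : ℝ) / 2) * exp (-(r ^ 2) / (4 * t))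

theorem heatProfile_nonneg {t : ℝ} (ht : 0 ≤ t) (r : ℝ) : 0 ≤ heatProfile t r := by
  have hratio : 0 ≤ r / sinh r := by
    obtain hr | hr := le_total 0 r
    · exact div_nonneg hr (sinh_nonneg_iff.mpr hr)
    · exact div_nonneg_of_nonpos hr (sinh_nonpos_iff.mpr hr)
  unfold heatProfile
  positivity

theorem hasDerivAt_heatProfile (t : ℝ) {r : ℝ} (hr : r ≠ 0) :
    HasDerivAt (heatProfile t)
      (heatProfile t r * (1 / r - cosh r / sinh r - r / (2 * t))) r := by
  have hS : sinh r ≠ 0 := sinh_ne_zero.mpr hr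
  have hratio : HasDerivAt (fun s ↦ s / sinh s) (r / sinh r * (1 / r - cosh r / sinh r)) r := by
    refine ((hasDerivAt_id r).div (hasDerivAt_sinh r) hS).congr_deriv ?_
    simp only [id]
    field_simp
  have hexp : HasDerivAt (fun s ↦ exp (-(s ^ 2) / (4 * t)))
      (exp (-(r ^ 2) / (4 * t)) * -(r / (2 * t))) r := by
    refine (((hasDerivAt_pow 2 r).fun_neg.div_const (4 * t)).exp).congr_deriv ?_
    ring
  refine (((hratio.const_mul _).mul_const _).mul hexp).congr_deriv ?_
  unfold heatProfile
  ring

theorem exists_heatProfile_mul_le :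
    ∃ C > 0, ∀ r > 0, ∀ t > 0,
      heatProfile t r * (1 + r ^ 2 / (2 * t)) ≤ C / (r ^ 2 * sinh r) := by
  let A : ℝ := 6 ^ ((3 : ℝ) / 2)
  let B : ℝ := 10 ^ ((5 : ℝ) / 2)
  refine ⟨(8 * π ^ ((3 : ℝ) / 2))⁻¹ * (A + B / 2), by positivity, fun r hr t ht ↦ ?_⟩
  have : 0 < sinh r := sinh_pos_iff.mpr hr
  have hA : t ^ (-(3 : ℝ) / 2) * exp (-(r ^ 2) / (4 * t)) ≤ A / r ^ 3 := by
    convert rpow_neg_mul_exp_neg_sq_div_le 3 hr ht using 3 <;> norm_num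
  have hB : t ^ (-(5 : ℝ) / 2) * exp (-(r ^ 2) / (4 * t)) ≤ B / r ^ 5 := by
    convert rpow_neg_mul_exp_neg_sq_div_le 5 hr ht using 3 <;> norm_num
  have hpow : t ^ (-(5 : ℝ) / 2) = t ^ (-(3 : ℝ) / 2) / t := by
    rw [← rpow_sub_one ht.ne']
    norm_num
  calc heatProfile t r * (1 + r ^ 2 / (2 * t))
      = (8 * π ^ ((3 : ℝ) / 2))⁻¹ * (r / sinh r) *
          (t ^ (-(3 : ℝ) / 2) * exp (-(r ^ 2) / (4 * t)) +
            r ^ 2 / 2 * (t ^ (-(5 : ℝ) / 2) * exp (-(r ^ 2) / (4 * t)))) := by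
        rw [hpow, heatProfile]
        ring
    _ ≤ (8 * π ^ ((3 : ℝ) / 2))⁻¹ * (r / sinh r) *
          (A / r ^ 3 + r ^ 2 / 2 * (B / r ^ 5)) := by
        gcongr
    _ = (8 * π ^ ((3 : ℝ) / 2))⁻¹ * (A + B / 2) / (r ^ 2 * sinh r) := by
        field_simp

section LogDerivBounds

variable {r t : ℝ}

theorem abs_one_div_sub_cosh_div_sinh_sub_le (hr : 1 ≤ r) (ht : 0 ≤ t) :
    |1 / r - cosh r / sinh r - r / (2 * t)| ≤ 2 * (1 + r ^ 2 / (2 * t)) := by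
  have : 0 < sinh r := sinh_pos_iff.mpr (by linarith)
  have hcoth : cosh r / sinh r ≤ 2 := cosh_div_sinh_le_two hr
  have hcoth_pos : 0 < cosh r / sinh r := by positivity
  have hinv : 1 / r ≤ 1 := div_le_one_of_le₀ hr (by linarith)
  have hinv_pos : 0 < 1 / r := by positivity
  have htime : r / (2 * t) ≤ r ^ 2 / (2 * t) := by
    gcongr
    exact le_self_pow₀ hr two_ne_zero
  have htime_nonneg : 0 ≤ r / (2 * t) := by positivity
  rw [abs_le]
  constructor <;> linarith

theorem abs_cosh_div_sinh_sub_sub_le (hr : 1 ≤ r) (ht : 0 ≤ t) :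
    |cosh r / sinh r - r / sinh r ^ 2 - cosh r / sinh r * (r ^ 2 / (2 * t))| ≤
      2 * (1 + r ^ 2 / (2 * t)) := by
  have hrS : r ≤ sinh r := self_le_sinh_iff.mpr (by linarith)
  have : 0 < sinh r := by linarith
  have hcoth : cosh r / sinh r ≤ 2 := cosh_div_sinh_le_two hr
  have hcoth_pos : 0 < cosh r / sinh r := by positivity
  have hcsch : r / sinh r ^ 2 ≤ 1 :=
    div_le_one_of_le₀ (hrS.trans (le_self_pow₀ (hr.trans hrS) two_ne_zero)) (by positivity)
  have hcsch_pos : 0 < r / sinh r ^ 2 := by positivity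
  have htime_nonneg : 0 ≤ r ^ 2 / (2 * t) := by positivity
  have htime : cosh r / sinh r * (r ^ 2 / (2 * t)) ≤ 2 * (r ^ 2 / (2 * t)) := by gcongr
  have hcoth_time_nonneg : 0 ≤ cosh r / sinh r * (r ^ 2 / (2 * t)) := by positivity
  rw [abs_le]
  constructor <;> linarith

end LogDerivBounds

section Group

variable {x : G}

theorem one_le_coshArg (ha : 0 < x.2.2) : 1 ≤ coshArg x := by
  have hsub : coshArg x - 1 = ((x.2.2 - 1) ^ 2 + x.1 ^ 2 + x.2.1 ^ 2) / (2 * x.2.2) := by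
    unfold coshArg
    field_simp
    ring
  rw [← sub_nonneg, hsub]
  positivity

theorem cosh_rG (ha : 0 < x.2.2) : cosh (rG x) = coshArg x :=
  cosh_arcosh (one_le_coshArg ha)

theorem sinh_rG (ha : 0 < x.2.2) : sinh (rG x) = √(coshArg x ^ 2 - 1) :=
  sinh_arcosh (one_le_coshArg ha)

theorem one_lt_coshArg (ha : 0 < x.2.2) (hr : rG x ≠ 0) : 1 < coshArg x :=
  (one_le_coshArg ha).lt_of_ne' fun h ↦ hr ((arcosh_eq_zero_iff (one_le_coshArg ha)).mpr h)

theorem hasDerivAt_coshArg (ha : x.2.2 ≠ 0) :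
    HasDerivAt (fun s ↦ coshArg (x.1, x.2.1, s)) ((x.2.2 - coshArg x) / x.2.2) x.2.2 := by
  have hinv := hasDerivAt_inv ha
  refine ((((hasDerivAt_id x.2.2).add hinv).add
    (hinv.mul_const (x.1 ^ 2 + x.2.1 ^ 2))).div_const 2).congr_deriv ?_
  unfold coshArg
  field_simp
  ring

theorem hasDerivAt_rG (ha : 0 < x.2.2) (hr : rG x ≠ 0) :
    HasDerivAt (fun s ↦ rG (x.1, x.2.1, s))
      ((x.2.2 - cosh (rG x)) / (x.2.2 * sinh (rG x))) x.2.2 := by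
  refine ((hasDerivAt_arcosh (one_lt_coshArg ha hr)).comp x.2.2
    (hasDerivAt_coshArg ha.ne')).congr_deriv ?_
  rw [cosh_rG ha, sinh_rG ha]
  ring

theorem X0_inv_mul_comp_rG {f : ℝ → ℝ} {f' : ℝ} (ha : 0 < x.2.2) (hr : rG x ≠ 0)
    (hf : HasDerivAt f f' (rG x)) :
    X0 (fun z ↦ z.2.2⁻¹ * f (rG z)) x =
      f' / sinh (rG x) - x.2.2⁻¹ * (f' * (cosh (rG x) / sinh (rG x)) + f (rG x)) := by
  have hS : sinh (rG x) ≠ 0 := sinh_ne_zero.mpr hr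
  have hcomp : HasDerivAt (fun s ↦ f (rG (x.1, x.2.1, s)))
      (f' * ((x.2.2 - cosh (rG x)) / (x.2.2 * sinh (rG x)))) x.2.2 :=
    HasDerivAt.comp x.2.2 hf (hasDerivAt_rG ha hr)
  rw [X0, ((hasDerivAt_inv ha.ne').fun_mul hcomp).deriv]
  field_simp
  ring

theorem heatK_eq_inv_mul_heatProfile (t : ℝ) (ha : 0 < x.2.2) (hr : rG x ≠ 0) :
    heatK t x = x.2.2⁻¹ * heatProfile t (rG x) := by
  rw [heatK, heatProfile, deltaG, sqrt_inv, sqrt_sq ha.le, if_neg hr]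
  ring

theorem heatK_eventuallyEq (t : ℝ) (ha : 0 < x.2.2) (hr : rG x ≠ 0) :
    (fun s ↦ heatK t (x.1, x.2.1, s)) =ᶠ[nhds x.2.2]
      fun s ↦ s⁻¹ * heatProfile t (rG (x.1, x.2.1, s)) := by
  filter_upwards [lt_mem_nhds ha, (hasDerivAt_rG ha hr).continuousAt.eventually_ne hr]
    with s hs hrs
  exact heatK_eq_inv_mul_heatProfile t hs hrs

theorem X0_heatK (t : ℝ) (ha : 0 < x.2.2) (hr : rG x ≠ 0) :
    X0 (heatK t) x =
      heatProfile t (rG x) / sinh (rG x) *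
          (1 / rG x - cosh (rG x) / sinh (rG x) - rG x / (2 * t)) -
      heatProfile t (rG x) / (x.2.2 * rG x) *
          (cosh (rG x) / sinh (rG x) - rG x / sinh (rG x) ^ 2 -
            cosh (rG x) / sinh (rG x) * (rG x ^ 2 / (2 * t))) := by
  have hS : sinh (rG x) ≠ 0 := sinh_ne_zero.mpr hr
  have hcurve : X0 (heatK t) x = X0 (fun z ↦ z.2.2⁻¹ * heatProfile t (rG z)) x := by
    rw [X0, X0, (heatK_eventuallyEq t ha hr).deriv_eq]
  rw [hcurve, X0_inv_mul_comp_rG ha hr (hasDerivAt_heatProfile t hr)]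
  have htime : rG x ^ 2 / (2 * t) = rG x * (rG x / (2 * t)) := by ring
  rw [htime]
  generalize rG x / (2 * t) = w
  field_simp
  linear_combination (heatProfile t (rG x) * rG x) * cosh_sq (rG x)

theorem abs_X0_heatK_le {t : ℝ} (ha : 0 < x.2.2) (hr : 1 ≤ rG x) (ht : 0 ≤ t) :
    |X0 (heatK t) x| ≤
      2 * (heatProfile t (rG x) * (1 + rG x ^ 2 / (2 * t))) *
        (1 / (x.2.2 * rG x) + 1 / sinh (rG x)) := by
  have hr0 : 0 < rG x := by linarith
  have hS : 0 < sinh (rG x) := sinh_pos_iff.mpr hr0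
  have hh : 0 ≤ heatProfile t (rG x) := heatProfile_nonneg ht _
  rw [X0_heatK t ha hr0.ne']
  refine (abs_sub _ _).trans ?_
  rw [abs_mul, abs_mul, abs_of_nonneg (div_nonneg hh hS.le),
    abs_of_nonneg (div_nonneg hh (mul_pos ha hr0).le)]
  calc _ ≤ heatProfile t (rG x) / sinh (rG x) * (2 * (1 + rG x ^ 2 / (2 * t))) +
          heatProfile t (rG x) / (x.2.2 * rG x) * (2 * (1 + rG x ^ 2 / (2 * t))) := by
        gcongr
        · exact abs_one_div_sub_cosh_div_sinh_sub_le hr ht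
        · exact abs_cosh_div_sinh_sub_sub_le hr ht
    _ = _ := by ring

end Group

theorem sup_X0_heatK_large :
    ∃ C > (0 : ℝ), ∀ x : G, 0 < x.2.2 → 1 ≤ rG x → ∀ t > (0 : ℝ),
      |X0 (heatK t) x| ≤ C * (1 / (x.2.2 * rG x ^ 3 * Real.cosh (rG x))
        + 1 / (rG x ^ 2 * Real.cosh (rG x) ^ 2)) := by
  obtain ⟨C, hC, hprofile⟩ := exists_heatProfile_mul_le
  refine ⟨8 * C, by positivity, fun x ha hr t ht ↦ ?_⟩
  have hr0 : 0 < rG x := by linarith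
  have : 0 < sinh (rG x) := sinh_pos_iff.mpr hr0
  have hcsch : 1 / sinh (rG x) ≤ 2 / cosh (rG x) := one_div_sinh_le_two_div_cosh hr
  calc |X0 (heatK t) x|
      ≤ 2 * (heatProfile t (rG x) * (1 + rG x ^ 2 / (2 * t))) *
          (1 / (x.2.2 * rG x) + 1 / sinh (rG x)) := abs_X0_heatK_le ha hr ht.le
    _ ≤ 2 * (C / (rG x ^ 2 * sinh (rG x))) * (1 / (x.2.2 * rG x) + 1 / sinh (rG x)) := by
        gcongr
        exact hprofile _ hr0 _ ht
    _ = 2 * C / rG x ^ 2 * (1 / sinh (rG x)) * (1 / (x.2.2 * rG x) + 1 / sinh (rG x)) := by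
        ring
    _ ≤ 2 * C / rG x ^ 2 * (2 / cosh (rG x)) *
          (2 * (1 / (x.2.2 * rG x)) + 2 / cosh (rG x)) := by
        gcongr
        exact le_mul_of_one_le_left (by positivity) one_le_two
    _ = 8 * C * (1 / (x.2.2 * rG x ^ 3 * cosh (rG x)) + 1 / (rG x ^ 2 * cosh (rG x) ^ 2)) := by
        field_simp
        norm_num
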